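/- If x̄ is a local minimizer of (P), then at least one of the following assertions holds: (a) x̄ is M-stationary; (b) there exist a critical direction d ∈ C(x̄) ∩ 𝕊 and an AM-stationary sequence {(x^k, λ^k, δ^k, ε^k)} w.r.t. x̄ in direction d that fulfills ‖λ^k‖ → ∞ as well as x^k ∉ X and δ^k ≠ 0 for all k. -/

import Mathlib

open Filter Topology Metric Set
open scoped RealInnerProductSpace Pointwise

noncomputable section

/-- Euclidean space `ℝ^n`. -/
abbrev Eu (n : ℕ) := EuclideanSpace ℝ (Fin n)

section Cones

variable {H : Type*} [NormedAddCommGroup H] [InnerProductSpace ℝ H]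

/-- Tangent (Bouligand) cone to `Ω` at `x` (empty if `x ∉ Ω`). -/
def tanCone (Ω : Set H) (x : H) : Set H :=
  {d | x ∈ Ω ∧ ∃ (dk : ℕ → H) (tk : ℕ → ℝ),
    Tendsto dk atTop (𝓝 d) ∧ (∀ k, 0 < tk k) ∧ Tendsto tk atTop (𝓝 0) ∧
    ∀ k, x + tk k • dk k ∈ Ω}

/-- Polar cone of a set. -/
def polarCone (C : Set H) : Set H := {y | ∀ x ∈ C, ⟪x, y⟫ ≤ 0}

/-- Regular (Fréchet) normal cone: polar of the tangent cone (empty if `x ∉ Ω`). -/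
def regNormal (Ω : Set H) (x : H) : Set H :=
  {η | x ∈ Ω ∧ η ∈ polarCone (tanCone Ω x)}

/-- Limiting (Mordukhovich) normal cone (empty if `x ∉ Ω`). -/
def limNormal (Ω : Set H) (x : H) : Set H :=
  {η | x ∈ Ω ∧ ∃ (xk ηk : ℕ → H),
    Tendsto xk atTop (𝓝 x) ∧ Tendsto ηk atTop (𝓝 η) ∧
    ∀ k, ηk k ∈ regNormal Ω (xk k)}

/-- Directional limiting normal cone to `Ω` at `x` in direction `d`. -/
def dirLimNormal (Ω : Set H) (x d : H) : Set H :=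
  {η | x ∈ Ω ∧ ∃ (dk : ℕ → H) (tk : ℕ → ℝ) (ηk : ℕ → H),
    Tendsto dk atTop (𝓝 d) ∧ (∀ k, 0 < tk k) ∧ Tendsto tk atTop (𝓝 0) ∧
    Tendsto ηk atTop (𝓝 η) ∧
    ∀ k, ηk k ∈ regNormal Ω (x + tk k • dk k)}

/-- The pair `(ξ, r)` as an element of the ℓ²-product `H ×₂ ℝ`. -/
def pl2 (ξ : H) (r : ℝ) : WithLp 2 (H × ℝ) := (WithLp.equiv 2 (H × ℝ)).symm (ξ, r)

/-- Epigraph of `φ` as a subset of the ℓ²-product `H ×₂ ℝ`. -/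
def epigraphSet (φ : H → ℝ) : Set (WithLp 2 (H × ℝ)) :=
  {p | φ ((WithLp.equiv 2 (H × ℝ)) p).1 ≤ ((WithLp.equiv 2 (H × ℝ)) p).2}

/-- Limiting subdifferential of `φ` at `x`. -/
def limSubdiff (φ : H → ℝ) (x : H) : Set H :=
  {ξ | pl2 ξ (-1) ∈ limNormal (epigraphSet φ) (pl2 x (φ x))}

/-- Directional limiting subdifferential of `φ` at `x` in direction `d`, where `φd`
denotes the directional derivative `φ'(x; d)`. -/
def dirLimSubdiff (φ : H → ℝ) (x d : H) (φd : ℝ) : Set H :=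
  {ξ | pl2 ξ (-1) ∈ dirLimNormal (epigraphSet φ) (pl2 x (φ x)) (pl2 d φd)}

/-- Directional neighborhood `B_{ε,δ}(d)`. -/
def dirNbhd (d : H) (ε δ : ℝ) : Set H :=
  {y | ‖y‖ ≤ ε ∧ ‖‖d‖ • y - ‖y‖ • d‖ ≤ δ * (‖y‖ * ‖d‖)}

end Cones

section Problem

variable {n l : ℕ}

/-- `F' x d` is the directional derivative of `F` at `x` in direction `d`. -/
def IsDirDeriv (F : Eu n → Eu l) (F' : Eu n → Eu n → Eu l) : Prop :=
  ∀ x d : Eu n,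
    Tendsto (fun t : ℝ => t⁻¹ • (F (x + t • d) - F x)) (𝓝[>] (0:ℝ)) (𝓝 (F' x d))

/-- Limiting subdifferential of the scalarization `⟨λ, F⟩` at `x`. -/
def scalSubdiff (F : Eu n → Eu l) (lam : Eu l) (x : Eu n) : Set (Eu n) :=
  limSubdiff (fun y => ⟪lam, F y⟫) x

/-- Directional limiting subdifferential of `⟨λ, F⟩` at `x` in direction `d`. -/
def scalDirSubdiff (F : Eu n → Eu l) (F' : Eu n → Eu n → Eu l) (lam : Eu l)
    (x d : Eu n) : Set (Eu n) :=
  dirLimSubdiff (fun y => ⟪lam, F y⟫) x d ⟪lam, F' x d⟫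

/-- Linearization cone. -/
def linCone (F : Eu n → Eu l) (F' : Eu n → Eu n → Eu l) (Γ : Set (Eu l)) (x : Eu n) :
    Set (Eu n) :=
  {d | F' x d ∈ tanCone Γ (F x)}

/-- Explicit critical cone `C(x̄)`. -/
def critCone (f : Eu n → ℝ) (F : Eu n → Eu l) (F' : Eu n → Eu n → Eu l)
    (Γ : Set (Eu l)) (x : Eu n) : Set (Eu n) :=
  {d | ⟪gradient f x, d⟫ ≤ 0 ∧ d ∈ linCone F F' Γ x}

/-- Implicit critical cone `Ĉ(x̄)`. -/
def implCritCone (f : Eu n → ℝ) (F : Eu n → Eu l) (Γ : Set (Eu l)) (x : Eu n) :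
    Set (Eu n) :=
  {d | ⟪gradient f x, d⟫ ≤ 0 ∧ d ∈ tanCone (F ⁻¹' Γ) x}

/-- M-stationarity. -/
def MStat (f : Eu n → ℝ) (F : Eu n → Eu l) (Γ : Set (Eu l)) (x : Eu n) : Prop :=
  ∃ lam : Eu l, -gradient f x ∈ scalSubdiff F lam x ∧ lam ∈ limNormal Γ (F x)

/-- M-stationarity in direction `d`. -/
def MStatDir (f : Eu n → ℝ) (F : Eu n → Eu l) (F' : Eu n → Eu n → Eu l)
    (Γ : Set (Eu l)) (x d : Eu n) : Prop :=
  ∃ lam : Eu l, -gradient f x ∈ scalDirSubdiff F F' lam x d ∧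
    lam ∈ dirLimNormal Γ (F x) (F' x d)

/-- Metric subregularity constraint qualification in direction `d`. -/
def MSCQdir (F : Eu n → Eu l) (Γ : Set (Eu l)) (x d : Eu n) : Prop :=
  ∃ ε > (0:ℝ), ∃ δ > (0:ℝ), ∃ κ > (0:ℝ), ∀ y : Eu n, y - x ∈ dirNbhd d ε δ →
    infDist y (F ⁻¹' Γ) ≤ κ * infDist (F y) Γ

/-- Metric subregularity constraint qualification. -/
def MSCQ (F : Eu n → Eu l) (Γ : Set (Eu l)) (x : Eu n) : Prop := MSCQdir F Γ x 0

/-- AM-stationary sequence w.r.t. `x`. -/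
def AMSeq (f : Eu n → ℝ) (F : Eu n → Eu l) (Γ : Set (Eu l)) (x : Eu n)
    (xk : ℕ → Eu n) (lamk δk : ℕ → Eu l) (εk : ℕ → Eu n) : Prop :=
  (∀ k, εk k - gradient f (xk k) ∈ scalSubdiff F (lamk k) (xk k)) ∧
  (∀ k, lamk k ∈ limNormal Γ (F (xk k) - δk k)) ∧
  Tendsto xk atTop (𝓝 x) ∧ Tendsto δk atTop (𝓝 0) ∧ Tendsto εk atTop (𝓝 0)

/-- AM-stationarity. -/
def AMStat (f : Eu n → ℝ) (F : Eu n → Eu l) (Γ : Set (Eu l)) (x : Eu n) : Prop :=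
  ∃ xk lamk δk εk, AMSeq f F Γ x xk lamk δk εk

/-- AM-stationary sequence w.r.t. `x` in direction `d`. -/
def AMSeqDir (f : Eu n → ℝ) (F : Eu n → Eu l) (Γ : Set (Eu l)) (x : Eu n)
    (xk : ℕ → Eu n) (lamk δk : ℕ → Eu l) (εk : ℕ → Eu n) (d : Eu n) : Prop :=
  AMSeq f F Γ x xk lamk δk εk ∧
  (∀ k, xk k ≠ x) ∧
  Tendsto (fun k => ‖xk k - x‖⁻¹ • (xk k - x)) atTop (𝓝 d) ∧
  Tendsto (fun k => ‖xk k - x‖⁻¹ • δk k) atTop (𝓝 (0 : Eu l)) ∧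
  (∃ θ : ℕ → ℝ, (∀ k, 0 ≤ θ k) ∧ Tendsto θ atTop (𝓝 0) ∧
    ∀ k, ‖‖δk k‖ • lamk k - ‖lamk k‖ • δk k‖ ≤ ‖δk k‖ * ‖lamk k‖ * θ k) ∧
  (∃ M : ℝ, ∀ k, ‖δk k‖ * ‖lamk k‖ / ‖xk k - x‖ ≤ M)

/-- AM-stationarity in direction `d`. -/
def AMStatDir (f : Eu n → ℝ) (F : Eu n → Eu l) (Γ : Set (Eu l)) (x d : Eu n) : Prop :=
  ∃ xk lamk δk εk, AMSeqDir f F Γ x xk lamk δk εk d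

/-- The Minkowski sum `Σ_i |λ_i| ∂(sgn(λ_i) F_i)(x; d)`. -/
def dirSumSet (F : Eu n → Eu l) (F' : Eu n → Eu n → Eu l) (lam : Eu l) (x d : Eu n) :
    Set (Eu n) :=
  {v | ∃ s : Fin l → Eu n,
    (∀ i, s i ∈ |lam i| • dirLimSubdiff (fun y => Real.sign (lam i) * F y i) x d
        (Real.sign (lam i) * F' x d i)) ∧
    v = ∑ i, s i}

/-- Standing sum-rule assumption. -/
def SumRule (F : Eu n → Eu l) (F' : Eu n → Eu n → Eu l) : Prop :=
  ∀ (x d : Eu n) (lam : Eu l), scalDirSubdiff F F' lam x d = dirSumSet F F' lam x d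

end Problem


/-!
Penalize the violation of `F w ∈ Γ` quadratically and add a proximal term centred at `x`. As
the penalty parameters `c k` tend to infinity, minimizers `z k` on a small ball tend to `x`,
and Fermat's rule makes `c k • (F (z k) - y k)`, with `y k` a projection of `F (z k)` onto `Γ`,
a multiplier that is normal to `Γ` at `y k`. If the multipliers do not diverge in norm, they
subconverge to one that proves M-stationarity. If they do, comparing the penalized values at
`z k` and `x` shows that `‖F (z k) - y k‖ * ‖c k • (F (z k) - y k)‖` is at most
`2 * (f x - f (z k))`, hence `O(‖z k - x‖)`. So `F (z k) - y k` is `o(‖z k - x‖)`, and every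
limit direction of `z k - x` is critical.
-/

section Cones

variable {H : Type*} [NormedAddCommGroup H] [InnerProductSpace ℝ H] {Ω : Set H} {x : H}

lemma mem_tanCone_of_tendsto {v : H} {t : ℕ → ℝ} {y : ℕ → H} (hx : x ∈ Ω) (hy : ∀ k, y k ∈ Ω)
    (ht : ∀ k, 0 < t k) (ht0 : Tendsto t atTop (𝓝 0))
    (hv : Tendsto (fun k => (t k)⁻¹ • (y k - x)) atTop (𝓝 v)) : v ∈ tanCone Ω x :=
  ⟨hx, _, t, hv, ht, ht0, fun k => by
    rw [smul_inv_smul₀ (ht k).ne', add_sub_cancel]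
    exact hy k⟩

lemma tanCone_subset_posTangentConeAt (Ω : Set H) (x : H) :
    tanCone Ω x ⊆ posTangentConeAt Ω x := by
  rintro d ⟨-, u, t, hu, ht, ht0, hmem⟩
  refine mem_tangentConeAt_of_seq atTop (fun k => (t k)⁻¹.toNNReal) (fun k => t k • u k)
    (by simpa using ht0.smul hu) (.of_forall hmem) (hu.congr fun k => ?_)
  rw [NNReal.smul_def, Real.coe_toNNReal _ (inv_nonneg.2 (ht k).le), inv_smul_smul₀ (ht k).ne']

lemma neg_mem_regNormal_of_isLocalMinOn {ψ : H → ℝ} {g : H} (hx : x ∈ Ω)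
    (hmin : IsLocalMinOn ψ Ω x) (hψ : HasFDerivAt ψ (innerSL ℝ g) x) : -g ∈ regNormal Ω x := by
  refine ⟨hx, fun d hd => ?_⟩
  have hgd : 0 ≤ ⟪g, d⟫ := hmin.hasFDerivWithinAt_nonneg hψ.hasFDerivWithinAt
    (tanCone_subset_posTangentConeAt Ω x hd)
  rwa [inner_neg_right, real_inner_comm, neg_nonpos]

lemma hasFDerivAt_mul_norm_sub_sq (a : ℝ) (p z : H) :
    HasFDerivAt (fun w => a * ‖w - p‖ ^ 2) (innerSL ℝ ((2 * a) • (z - p))) z :=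
  (((hasFDerivAt_id z).sub_const p).norm_sq.const_mul a).congr_fderiv <| by
    ext v
    simp
    ring

lemma sub_mem_regNormal_of_infDist_eq_dist {p y : H} (hy : y ∈ Ω)
    (hp : infDist p Ω = dist p y) : p - y ∈ regNormal Ω y := by
  have hmin : IsLocalMinOn (fun w => 1 / 2 * ‖w - p‖ ^ 2) Ω y := by
    refine IsMinOn.localize (isMinOn_iff.2 fun w hw => ?_)
    have hle : ‖y - p‖ ≤ ‖w - p‖ := by
      rw [← dist_eq_norm, ← dist_eq_norm, dist_comm y, dist_comm w, ← hp]
      exact infDist_le_dist_of_mem hw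
    gcongr
  simpa using neg_mem_regNormal_of_isLocalMinOn hy hmin (hasFDerivAt_mul_norm_sub_sq (1 / 2) p y)

lemma smul_mem_regNormal {η : H} {c : ℝ} (hc : 0 ≤ c) (hη : η ∈ regNormal Ω x) :
    c • η ∈ regNormal Ω x :=
  ⟨hη.1, fun d hd => by
    rw [inner_smul_right]
    exact mul_nonpos_of_nonneg_of_nonpos hc (hη.2 d hd)⟩

lemma regNormal_subset_limNormal (Ω : Set H) (x : H) : regNormal Ω x ⊆ limNormal Ω x :=
  fun η hη => ⟨hη.1, fun _ => x, fun _ => η, tendsto_const_nhds, tendsto_const_nhds, fun _ => hη⟩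

end Cones

section Subgradients

variable {H : Type*} [NormedAddCommGroup H] [InnerProductSpace ℝ H]
  {φ ψ : H → ℝ} {x z ξ g : H} {η κ : ℝ}

/-- `ξ` is an `η`-regular (analytic `η`-Fréchet) subgradient of `φ` at `x`: up to an error
`(η + o(1)) ‖y - x‖`, the function `φ` lies above its linearization with slope `ξ`. For `η = 0`
this is the regular subgradient; positive `η` makes the notion stable under small Lipschitz
perturbations of `φ`. -/
def IsRegSubgradient (η : ℝ) (φ : H → ℝ) (x ξ : H) : Prop :=
  ∀ c > η, ∀ᶠ y in 𝓝 x, φ x + ⟪ξ, y - x⟫ - c * ‖y - x‖ ≤ φ y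

lemma isRegSubgradient_neg_of_isLocalMin_add (hmin : IsLocalMin (fun w => φ w + ψ w) z)
    (hψ : HasFDerivAt ψ (innerSL ℝ g) z) : IsRegSubgradient 0 φ z (-g) := by
  intro c hc
  filter_upwards [hmin, (hasFDerivAt_iff_isLittleO.1 hψ).def hc] with w hw hψw
  have hψw' : ψ w - ψ z - ⟪g, w - z⟫ ≤ c * ‖w - z‖ := (le_abs_self _).trans hψw
  rw [inner_neg_left]
  linarith

lemma IsRegSubgradient.of_sub_le (h : IsRegSubgradient η φ x ξ)
    (hψ : ∀ᶠ y in 𝓝 x, (φ y - φ x) - (ψ y - ψ x) ≤ κ * ‖y - x‖) :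
    IsRegSubgradient (η + κ) ψ x ξ := by
  intro c hc
  filter_upwards [h (c - κ) (by linarith), hψ] with y hφy hψy
  linarith

lemma IsRegSubgradient.inner_fst_le_snd (h : IsRegSubgradient 0 φ x ξ)
    {d : WithLp 2 (H × ℝ)} (hd : d ∈ tanCone (epigraphSet φ) (pl2 x (φ x))) :
    ⟪ξ, d.fst⟫ ≤ d.snd := by
  obtain ⟨-, u, t, hu, ht, ht0, hmem⟩ := hd
  have hu₁ : Tendsto (fun k => (u k).fst) atTop (𝓝 d.fst) :=
    ((WithLp.continuous_fst (p := 2) (α := H) (β := ℝ)).tendsto d).comp hu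
  have hu₂ : Tendsto (fun k => (u k).snd) atTop (𝓝 d.snd) :=
    ((WithLp.continuous_snd (p := 2) (α := H) (β := ℝ)).tendsto d).comp hu
  have hx : Tendsto (fun k => x + t k • (u k).fst) atTop (𝓝 x) := by
    simpa using tendsto_const_nhds.add (ht0.smul hu₁)
  have hslope : ∀ c > (0 : ℝ), ⟪ξ, d.fst⟫ - c * ‖d.fst‖ ≤ d.snd := by
    intro c hc
    refine le_of_tendsto_of_tendsto
      ((tendsto_const_nhds.inner hu₁).sub (hu₁.norm.const_mul c)) hu₂ ?_
    filter_upwards [hx.eventually (h c hc)] with k hk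
    have hepi : φ (x + t k • (u k).fst) ≤ φ x + t k * (u k).snd := by
      simpa [epigraphSet, pl2] using hmem k
    rw [add_sub_cancel_left, inner_smul_right, norm_smul, Real.norm_of_nonneg (ht k).le] at hk
    refine le_of_mul_le_mul_left ?_ (ht k)
    linarith
  have hlim : Tendsto (fun c : ℝ => ⟪ξ, d.fst⟫ - c * ‖d.fst‖) (𝓝[>] 0) (𝓝 ⟪ξ, d.fst⟫) :=
    tendsto_nhdsWithin_of_tendsto_nhds <|
      (by fun_prop : Continuous fun c : ℝ => ⟪ξ, d.fst⟫ - c * ‖d.fst‖).tendsto' 0 _ (by simp)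
  exact le_of_tendsto hlim (eventually_mem_nhdsWithin.mono hslope)

lemma IsRegSubgradient.pl2_mem_regNormal (h : IsRegSubgradient 0 φ x ξ) :
    pl2 ξ (-1) ∈ regNormal (epigraphSet φ) (pl2 x (φ x)) := by
  refine ⟨by simp [epigraphSet, pl2], fun d hd => ?_⟩
  have hinner : ⟪d, pl2 ξ (-1)⟫ = ⟪ξ, d.fst⟫ - d.snd := by
    simp [pl2, WithLp.prod_inner_apply, real_inner_comm, sub_eq_add_neg]
  linarith [h.inner_fst_le_snd hd]

lemma IsRegSubgradient.mem_limSubdiff (h : IsRegSubgradient 0 φ x ξ) : ξ ∈ limSubdiff φ x :=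
  regNormal_subset_limNormal _ _ h.pl2_mem_regNormal

lemma mem_limSubdiff_of_tendsto (hφ : ContinuousAt φ x) {z ζ : ℕ → H}
    (hz : Tendsto z atTop (𝓝 x)) (hζ : Tendsto ζ atTop (𝓝 ξ))
    (h : ∀ k, IsRegSubgradient 0 φ (z k) (ζ k)) : ξ ∈ limSubdiff φ x := by
  have hpl2 : Continuous fun q : H × ℝ => pl2 q.1 q.2 := WithLp.prod_continuous_toLp 2 H ℝ
  exact ⟨by simp [epigraphSet, pl2], fun k => pl2 (z k) (φ (z k)), fun k => pl2 (ζ k) (-1),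
    (hpl2.tendsto (x, φ x)).comp (hz.prodMk_nhds (hφ.tendsto.comp hz)),
    (hpl2.tendsto (ξ, -1)).comp (hζ.prodMk_nhds tendsto_const_nhds),
    fun k => (h k).pl2_mem_regNormal⟩

/- Smooth variational principle: on a small ball, `φ - ⟪ξ, ·⟫ + a ‖· - x‖²` with `a` large has an
interior minimizer, at which `φ` has a regular subgradient. -/
lemma IsRegSubgradient.exists_near [ProperSpace H] (h : IsRegSubgradient η φ x ξ)
    (hφ : Continuous φ) (hη : 0 ≤ η) {r : ℝ} (hr : 0 < r) :
    ∃ z ζ, dist z x < r ∧ dist ζ ξ ≤ 2 * η + r ∧ IsRegSubgradient 0 φ z ζ := by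
  obtain ⟨ρ₀, hρ₀, hball⟩ := Metric.nhds_basis_closedBall.eventually_iff.1
    (h (η + r / 2) (by linarith))
  obtain ⟨ρ, hρ, hρlt⟩ := exists_between (lt_min hρ₀ hr)
  obtain ⟨hρρ₀, hρr⟩ := lt_min_iff.1 hρlt
  obtain ⟨a, ha, haρ⟩ : ∃ a > 0, a * ρ > η + r / 2 :=
    ⟨(η + r) / ρ, by positivity, by rw [div_mul_cancel₀ _ hρ.ne']; linarith⟩
  obtain ⟨z, hz, hzmin⟩ := (isCompact_closedBall x ρ).exists_isMinOn
    (f := fun w => φ w + (a * ‖w - x‖ ^ 2 - ⟪ξ, w - x⟫)) ⟨x, mem_closedBall_self hρ.le⟩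
    (by fun_prop)
  have hzx : a * ‖z - x‖ ^ 2 ≤ (η + r / 2) * ‖z - x‖ := by
    have hle := isMinOn_iff.1 hzmin x (mem_closedBall_self hρ.le)
    simp only [sub_self, inner_zero_right, norm_zero] at hle
    linarith [hball (closedBall_subset_closedBall hρρ₀.le hz)]
  have hzx' : a * ‖z - x‖ ≤ η + r / 2 := by
    rcases (norm_nonneg (z - x)).eq_or_lt with h0 | hpos
    · rw [← h0, mul_zero]; positivity
    · exact le_of_mul_le_mul_right (by linarith) hpos
  have hzρ : dist z x < ρ := by
    rw [dist_eq_norm]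
    exact lt_of_mul_lt_mul_left (hzx'.trans_lt haρ) ha.le
  have hderiv : HasFDerivAt (fun w => a * ‖w - x‖ ^ 2 - ⟪ξ, w - x⟫)
      (innerSL ℝ ((2 * a) • (z - x) - ξ)) z := by
    have hlin : HasFDerivAt (fun w => ⟪ξ, w - x⟫) (innerSL ℝ ξ) z :=
      (innerSL ℝ ξ).hasFDerivAt.comp z ((hasFDerivAt_id z).sub_const x)
    exact ((hasFDerivAt_mul_norm_sub_sq a x z).sub hlin).congr_fderiv (map_sub _ _ _).symm
  refine ⟨z, -((2 * a) • (z - x) - ξ), hzρ.trans hρr, ?_,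
    isRegSubgradient_neg_of_isLocalMin_add
      (hzmin.isLocalMin (closedBall_mem_nhds_of_mem hzρ)) hderiv⟩
  rw [neg_sub, dist_eq_norm, sub_sub_cancel_left, norm_neg, norm_smul,
    Real.norm_of_nonneg (by positivity)]
  linarith

lemma mem_limSubdiff_of_tendsto_of_tendsto_zero [ProperSpace H] (hφ : Continuous φ)
    {z ζ : ℕ → H} {η : ℕ → ℝ} (hz : Tendsto z atTop (𝓝 x)) (hζ : Tendsto ζ atTop (𝓝 ξ))
    (hη : Tendsto η atTop (𝓝 0)) (hη0 : ∀ k, 0 ≤ η k)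
    (h : ∀ k, IsRegSubgradient (η k) φ (z k) (ζ k)) : ξ ∈ limSubdiff φ x := by
  have hr : Tendsto (fun k : ℕ => 1 / ((k : ℝ) + 1)) atTop (𝓝 0) :=
    tendsto_one_div_add_atTop_nhds_zero_nat
  choose z' ζ' hz' hζ' hsub using fun k : ℕ =>
    (h k).exists_near hφ (hη0 k) (Nat.one_div_pos_of_nat (α := ℝ) (n := k))
  refine mem_limSubdiff_of_tendsto hφ.continuousAt (hz.congr_dist ?_) (hζ.congr_dist ?_) hsub
  · refine squeeze_zero (fun _ => dist_nonneg) (fun k => ?_) hr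
    rw [dist_comm]
    exact (hz' k).le
  · have hbound : Tendsto (fun k : ℕ => 2 * η k + 1 / ((k : ℝ) + 1)) atTop (𝓝 0) := by
      simpa only [mul_zero, add_zero] using (hη.const_mul 2).add hr
    refine squeeze_zero (fun _ => dist_nonneg) (fun k => ?_) hbound
    rw [dist_comm]
    exact hζ' k

variable {G : Type*} [NormedAddCommGroup G] [InnerProductSpace ℝ G] {F : H → G}

lemma mem_limSubdiff_inner_of_tendsto [ProperSpace H] (hF : LocallyLipschitz F)
    {z ζ : ℕ → H} {lam : ℕ → G} {L : G} (hz : Tendsto z atTop (𝓝 x))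
    (hζ : Tendsto ζ atTop (𝓝 ξ)) (hlam : Tendsto lam atTop (𝓝 L))
    (h : ∀ k, IsRegSubgradient 0 (fun w => ⟪lam k, F w⟫) (z k) (ζ k)) :
    ξ ∈ limSubdiff (fun w => ⟪L, F w⟫) x := by
  have hFc := hF.continuous
  obtain ⟨K, s, hs, hK⟩ := hF x
  obtain ⟨N, hN⟩ := eventually_atTop.1 (hz.eventually (eventually_eventually_nhds.2 hs))
  have hη : Tendsto (fun k => ‖lam k - L‖ * K) atTop (𝓝 0) := by
    simpa using (hlam.sub_const L).norm.mul_const (K : ℝ)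
  have hshift := tendsto_add_atTop_nat N
  refine mem_limSubdiff_of_tendsto_of_tendsto_zero (by fun_prop) (hz.comp hshift)
    (hζ.comp hshift) (hη.comp hshift) (fun _ => mul_nonneg (norm_nonneg _) K.coe_nonneg) fun k => ?_
  simp only [Function.comp_apply]
  rw [← zero_add (‖lam (k + N) - L‖ * _)]
  have hsk := hN (k + N) (Nat.le_add_left N k)
  refine (h (k + N)).of_sub_le (hsk.mono fun w hw => ?_)
  calc _ = ⟪lam (k + N) - L, F w - F (z (k + N))⟫ := by
        simp only [inner_sub_left, inner_sub_right]
        ring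
    _ ≤ ‖lam (k + N) - L‖ * ‖F w - F (z (k + N))‖ := real_inner_le_norm _ _
    _ ≤ ‖lam (k + N) - L‖ * (K * ‖w - z (k + N)‖) := by
        gcongr
        exact hK.norm_sub_le hw hsk.self_of_nhds
    _ = _ := by ring

end Subgradients

section DirectionalLimits

variable {E : Type*} [NormedAddCommGroup E] [NormedSpace ℝ E]
  {G : Type*} [NormedAddCommGroup G] [NormedSpace ℝ G] {F : E → G} {x d : E} {v : G}
  {ι : Type*} {m : Filter ι}

lemma tendsto_inv_smul_sub_of_locallyLipschitz (hF : LocallyLipschitz F)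
    (hv : Tendsto (fun t : ℝ => t⁻¹ • (F (x + t • d) - F x)) (𝓝[>] 0) (𝓝 v))
    {t : ι → ℝ} {u : ι → E} (ht : Tendsto t m (𝓝[>] 0)) (hu : Tendsto u m (𝓝 d)) :
    Tendsto (fun i => (t i)⁻¹ • (F (x + t i • u i) - F x)) m (𝓝 v) := by
  obtain ⟨ht0, htpos⟩ := tendsto_nhdsWithin_iff.1 ht
  obtain ⟨K, s, hs, hK⟩ := hF x
  have hmem : ∀ {w : ι → E}, Tendsto w m (𝓝 d) → ∀ᶠ i in m, x + t i • w i ∈ s := fun hw =>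
    Tendsto.eventually_mem (by simpa using tendsto_const_nhds.add (ht0.smul hw)) hs
  have hdiff : Tendsto (fun i => (t i)⁻¹ • (F (x + t i • u i) - F (x + t i • d))) m (𝓝 0) := by
    refine squeeze_zero_norm' (a := fun i => K * ‖u i - d‖) ?_ ?_
    · filter_upwards [htpos, hmem hu, hmem tendsto_const_nhds] with i hti hui hdi
      have hti' : 0 < t i := hti
      calc ‖(t i)⁻¹ • (F (x + t i • u i) - F (x + t i • d))‖
          = (t i)⁻¹ * ‖F (x + t i • u i) - F (x + t i • d)‖ := by
            rw [norm_smul, norm_inv, Real.norm_of_nonneg hti'.le]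
        _ ≤ (t i)⁻¹ * (K * ‖x + t i • u i - (x + t i • d)‖) := by
            gcongr
            exact hK.norm_sub_le hui hdi
        _ = K * ‖u i - d‖ := by
            rw [add_sub_add_left_eq_sub, ← smul_sub, norm_smul, Real.norm_of_nonneg hti'.le]
            field_simp
    · simpa using (hu.sub_const d).norm.const_mul (K : ℝ)
  simpa [← smul_add] using hdiff.add (hv.comp ht)

lemma tendsto_inv_norm_smul_sub_of_locallyLipschitz (hF : LocallyLipschitz F)
    (hv : Tendsto (fun t : ℝ => t⁻¹ • (F (x + t • d) - F x)) (𝓝[>] 0) (𝓝 v))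
    {z : ι → E} (hz : Tendsto z m (𝓝[≠] x))
    (hd : Tendsto (fun i => ‖z i - x‖⁻¹ • (z i - x)) m (𝓝 d)) :
    Tendsto (fun i => ‖z i - x‖⁻¹ • (F (z i) - F x)) m (𝓝 v) := by
  have ht : Tendsto (fun i => ‖z i - x‖) m (𝓝[>] 0) := (tendsto_norm_sub_self_nhdsNE x).comp hz
  refine (tendsto_inv_smul_sub_of_locallyLipschitz hF hv ht hd).congr fun i => ?_
  rw [← NormedSpace.normalize, NormedSpace.norm_smul_normalize, add_sub_cancel]

lemma tendsto_inv_norm_smul_sub_of_hasFDerivAt {F' : E →L[ℝ] G} (hF : HasFDerivAt F F' x)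
    {z : ι → E} (hz : Tendsto z m (𝓝 x))
    (hd : Tendsto (fun i => ‖z i - x‖⁻¹ • (z i - x)) m (𝓝 d)) :
    Tendsto (fun i => ‖z i - x‖⁻¹ • (F (z i) - F x)) m (𝓝 (F' d)) := by
  have hz0 : Tendsto (fun i => z i - x) m (𝓝 0) := by simpa using hz.sub_const x
  simpa using hF.hasFDerivWithinAt.lim (s := univ) hz0 (.of_forall fun _ => mem_univ _) hd

lemma exists_subseq_tendsto_inv_norm_smul_sub [ProperSpace E] {z : ℕ → E} (hz : ∀ k, z k ≠ x) :
    ∃ d, ‖d‖ = 1 ∧ ∃ φ : ℕ → ℕ, StrictMono φ ∧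
      Tendsto (fun k => ‖z (φ k) - x‖⁻¹ • (z (φ k) - x)) atTop (𝓝 d) := by
  obtain ⟨d, hd, φ, hφ, hlim⟩ := (isCompact_sphere (0 : E) 1).tendsto_subseq
    (x := fun k => ‖z k - x‖⁻¹ • (z k - x)) fun k => by
      rw [mem_sphere_zero_iff_norm]
      exact norm_smul_inv_norm (𝕜 := ℝ) (sub_ne_zero.2 (hz k))
  exact ⟨d, mem_sphere_zero_iff_norm.1 hd, φ, hφ, hlim⟩

end DirectionalLimits

lemma hasFDerivAt_mul_norm_sub_sq_zero {E G : Type*} [NormedAddCommGroup E] [NormedSpace ℝ E]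
    [NormedAddCommGroup G] {F : E → G} (hF : LocallyLipschitz F) (a : ℝ) (x : E) :
    HasFDerivAt (fun w => a * ‖F w - F x‖ ^ 2) (0 : E →L[ℝ] ℝ) x := by
  obtain ⟨K, s, hs, hK⟩ := hF x
  have hbound : (fun w => F w - F x) =O[𝓝 x] fun w => w - x :=
    .of_bound K (mem_of_superset hs fun w hw => hK.norm_sub_le hw (mem_of_mem_nhds hs))
  exact ((hbound.norm_norm.pow 2).const_mul_left a).hasFDerivAt one_lt_two

lemma tendsto_of_add_mul_le {X ι : Type*} [TopologicalSpace X] {m : Filter ι} {K : Set X}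
    (hK : IsCompact K) {f g : X → ℝ} (hf : ContinuousOn f K) (hg : ContinuousOn g K) {x : X}
    (hx : ∀ w ∈ K, g w ≤ 0 → f w ≤ f x → w = x) (hg0 : ∀ w ∈ K, 0 ≤ g w)
    {c : ι → ℝ} (hc : Tendsto c m atTop) {z : ι → X} (hzK : ∀ i, z i ∈ K)
    (hz : ∀ i, f (z i) + c i * g (z i) ≤ f x) : Tendsto z m (𝓝 x) := by
  refine hK.tendsto_nhds_of_unique_mapClusterPt (.of_forall hzK) fun a haK ha => ?_
  obtain ⟨U, hU, hzU⟩ := mapClusterPt_iff_ultrafilter.1 ha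
  have hzU' : Tendsto z U (𝓝[K] a) := tendsto_nhdsWithin_iff.2 ⟨hzU, .of_forall hzK⟩
  have hfU : Tendsto (fun i => f (z i)) U (𝓝 (f a)) := (hf a haK).tendsto.comp hzU'
  have hgU : Tendsto (fun i => g (z i)) U (𝓝 (g a)) := (hg a haK).tendsto.comp hzU'
  have hcU : Tendsto c U atTop := hc.mono_left hU
  refine hx a haK ?_ ?_
  · have hquot : Tendsto (fun i => (f x - f (z i)) / c i) U (𝓝 0) :=
      (tendsto_const_nhds.sub hfU).div_atTop hcU
    refine le_of_tendsto_of_tendsto hgU hquot ?_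
    filter_upwards [hcU.eventually_gt_atTop 0] with i hi
    rw [le_div_iff₀ hi]
    linarith [hz i]
  · refine le_of_tendsto hfU ?_
    filter_upwards [hcU.eventually_ge_atTop 0] with i hi
    linarith [hz i, mul_nonneg hi (hg0 _ (hzK i))]

lemma exists_subseq_tendsto_of_not_tendsto_norm_atTop {G : Type*} [SeminormedAddCommGroup G]
    [ProperSpace G] {u : ℕ → G} (hu : ¬ Tendsto (fun k => ‖u k‖) atTop atTop) :
    ∃ L, ∃ φ : ℕ → ℕ, StrictMono φ ∧ Tendsto (u ∘ φ) atTop (𝓝 L) := by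
  simp only [Filter.tendsto_atTop, not_forall, not_eventually, not_le] at hu
  obtain ⟨M, hM⟩ := hu
  obtain ⟨L, -, φ, hφ, hL⟩ := tendsto_subseq_of_frequently_bounded isBounded_closedBall
    (hM.mono fun k hk => mem_closedBall_zero_iff.2 hk.le)
  exact ⟨L, φ, hφ, hL⟩

section Penalty

variable {E : Type*} [NormedAddCommGroup E] {G : Type*} [NormedAddCommGroup G]
  {f : E → ℝ} {F : E → G} {Γ : Set G} {x : E}

/-- The objective of the penalized problem: violation of `F w ∈ Γ` is penalized with parameter `c`,
and the proximal term makes `x` a strict local minimizer. -/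
def penaltyFun (f : E → ℝ) (F : E → G) (Γ : Set G) (x : E) (c : ℝ) (w : E) : ℝ :=
  f w + c / 2 * infDist (F w) Γ ^ 2 + 1 / 2 * ‖w - x‖ ^ 2

lemma penaltyFun_self (hx : F x ∈ Γ) (c : ℝ) : penaltyFun f F Γ x c x = f x := by
  simp [penaltyFun, infDist_zero_of_mem hx]

lemma continuous_penaltyFun (hf : Continuous f) (hF : Continuous F) (c : ℝ) :
    Continuous (penaltyFun f F Γ x c) := by
  have := (continuous_infDist_pt Γ).comp hF
  unfold penaltyFun
  fun_prop

lemma isLocalMin_penaltyFun_singleton {c : ℝ} {z : E} {y : G} (hc : 0 ≤ c) (hy : y ∈ Γ)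
    (hzy : infDist (F z) Γ = dist (F z) y) (h : IsLocalMin (penaltyFun f F Γ x c) z) :
    IsLocalMin (penaltyFun f F {y} x c) z := by
  have hz : penaltyFun f F {y} x c z = penaltyFun f F Γ x c z := by
    simp only [penaltyFun, infDist_singleton, hzy]
  filter_upwards [h] with w hw
  rw [hz]
  refine hw.trans ?_
  unfold penaltyFun
  gcongr
  · exact infDist_nonneg
  · exact infDist_le_infDist_of_subset (singleton_subset_iff.2 hy) (singleton_nonempty y)

/-- A penalty sequence for minimizing `f` subject to `F z ∈ Γ` near `x`: local minimizers `z k → x`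
of the penalized problems with parameters `c k`, at a value not exceeding that of `x`, together with
projections `y k` of `F (z k)` onto `Γ`. -/
structure IsPenaltySeq (f : E → ℝ) (F : E → G) (Γ : Set G) (x : E)
    (c : ℕ → ℝ) (z : ℕ → E) (y : ℕ → G) : Prop where
  nonneg : ∀ k, 0 ≤ c k
  isLocalMin : ∀ k, IsLocalMin (penaltyFun f F Γ x (c k)) (z k)
  penaltyFun_le : ∀ k, penaltyFun f F Γ x (c k) (z k) ≤ f x
  tendsto : Tendsto z atTop (𝓝 x)
  mem : ∀ k, y k ∈ Γ
  infDist_eq : ∀ k, infDist (F (z k)) Γ = dist (F (z k)) (y k)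

lemma tendsto_of_penaltyFun_le (hf : Continuous f) (hF : Continuous F) (hΓ : IsClosed Γ)
    (hx : F x ∈ Γ) {K : Set E} (hK : IsCompact K) (hmin : ∀ w ∈ K, F w ∈ Γ → f x ≤ f w)
    {c : ℕ → ℝ} (hc : Tendsto c atTop atTop) {z : ℕ → E} (hzK : ∀ k, z k ∈ K)
    (hz : ∀ k, penaltyFun f F Γ x (c k) (z k) ≤ f x) : Tendsto z atTop (𝓝 x) := by
  have hdist : Continuous fun w => infDist (F w) Γ := (continuous_infDist_pt Γ).comp hF
  refine tendsto_of_add_mul_le hK (f := fun w => f w + 1 / 2 * ‖w - x‖ ^ 2)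
    (g := fun w => 1 / 2 * infDist (F w) Γ ^ 2) (by fun_prop)
    (continuous_const.mul (hdist.pow 2)).continuousOn
    (fun w hw hgw hfw => ?_) (fun w _ => by positivity) hc hzK fun k => ?_
  · have hdist0 : infDist (F w) Γ = 0 := pow_eq_zero_iff two_ne_zero |>.1 (by nlinarith)
    have hFw : F w ∈ Γ := (hΓ.mem_iff_infDist_zero ⟨_, hx⟩).2 hdist0
    have hwx : ‖w - x‖ ^ 2 = 0 := by
      simp only [sub_self, norm_zero] at hfw
      nlinarith [hmin w hw hFw]
    exact sub_eq_zero.1 (norm_eq_zero.1 (pow_eq_zero_iff two_ne_zero |>.1 hwx))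
  · have hle := hz k
    simp only [penaltyFun, sub_self, norm_zero] at hle ⊢
    linarith

lemma exists_isPenaltySeq [ProperSpace E] [ProperSpace G] (hf : Continuous f) (hF : Continuous F)
    (hΓ : IsClosed Γ) (hx : F x ∈ Γ) (hmin : IsLocalMinOn f (F ⁻¹' Γ) x) :
    ∃ c z y, IsPenaltySeq f F Γ x c z y := by
  obtain ⟨ρ, hρ, hball⟩ := Metric.nhds_basis_closedBall.eventually_iff.1
    (eventually_nhdsWithin_iff.1 hmin)
  have hxρ : x ∈ closedBall x ρ := mem_closedBall_self hρ.le
  have hex (k : ℕ) : ∃ z ∈ closedBall x ρ, IsMinOn (penaltyFun f F Γ x k) (closedBall x ρ) z :=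
    (isCompact_closedBall x ρ).exists_isMinOn ⟨x, hxρ⟩ (continuous_penaltyFun hf hF _).continuousOn
  choose z hzρ hz using hex
  choose y hy hzy using fun k => hΓ.exists_infDist_eq_dist ⟨_, hx⟩ (F (z k))
  have hle (k : ℕ) : penaltyFun f F Γ x k (z k) ≤ f x :=
    (isMinOn_iff.1 (hz k) x hxρ).trans_eq (penaltyFun_self hx _)
  have hlim : Tendsto z atTop (𝓝 x) := tendsto_of_penaltyFun_le hf hF hΓ hx
    (isCompact_closedBall x ρ) hball tendsto_natCast_atTop_atTop hzρ hle
  obtain ⟨N, hN⟩ := eventually_atTop.1 (hlim.eventually_mem (ball_mem_nhds x hρ))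
  exact ⟨fun k => (k + N : ℕ), fun k => z (k + N), fun k => y (k + N),
    { nonneg := fun _ => Nat.cast_nonneg _
      isLocalMin := fun k => (hz _).isLocalMin <|
        closedBall_mem_nhds_of_mem (hN _ (Nat.le_add_left N k))
      penaltyFun_le := fun _ => hle _
      tendsto := hlim.comp (tendsto_add_atTop_nat N)
      mem := fun _ => hy _
      infDist_eq := fun _ => hzy _ }⟩

namespace IsPenaltySeq

variable {c : ℕ → ℝ} {z : ℕ → E} {y : ℕ → G}

lemma comp (h : IsPenaltySeq f F Γ x c z y) {φ : ℕ → ℕ} (hφ : Tendsto φ atTop atTop) :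
    IsPenaltySeq f F Γ x (c ∘ φ) (z ∘ φ) (y ∘ φ) where
  nonneg _ := h.nonneg _
  isLocalMin _ := h.isLocalMin _
  penaltyFun_le _ := h.penaltyFun_le _
  tendsto := h.tendsto.comp hφ
  mem _ := h.mem _
  infDist_eq _ := h.infDist_eq _

lemma le (h : IsPenaltySeq f F Γ x c z y) (k : ℕ) : f (z k) ≤ f x := by
  have hle := h.penaltyFun_le k
  have hpen : 0 ≤ c k / 2 * infDist (F (z k)) Γ ^ 2 + 1 / 2 * ‖z k - x‖ ^ 2 := by
    have := h.nonneg k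
    positivity
  unfold penaltyFun at hle
  linarith

lemma tendsto_sub (h : IsPenaltySeq f F Γ x c z y) (hF : Continuous F) (hx : F x ∈ Γ) :
    Tendsto (fun k => F (z k) - y k) atTop (𝓝 0) := by
  rw [tendsto_zero_iff_norm_tendsto_zero]
  have hlim : Tendsto (fun k => infDist (F (z k)) Γ) atTop (𝓝 (infDist (F x) Γ)) :=
    (((continuous_infDist_pt Γ).comp hF).tendsto x).comp h.tendsto
  rw [infDist_zero_of_mem hx] at hlim
  exact hlim.congr fun k => by rw [h.infDist_eq, dist_eq_norm]

lemma tendsto_proj (h : IsPenaltySeq f F Γ x c z y) (hF : Continuous F) (hx : F x ∈ Γ) :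
    Tendsto y atTop (𝓝 (F x)) := by
  simpa using ((hF.tendsto x).comp h.tendsto).sub (h.tendsto_sub hF hx)

end IsPenaltySeq

end Penalty

section Multipliers

variable {E : Type*} [NormedAddCommGroup E] {G : Type*} [NormedAddCommGroup G] [NormedSpace ℝ G]

/-- The multipliers `λ^k` induced by a penalty sequence: `c / 2 * ‖F w - y‖ ^ 2` has at `z` the same
first-order behaviour as `w ↦ ⟪c • (F z - y), F w⟫`, even where `F` is not differentiable. -/
def penaltyMultiplier (F : E → G) (c : ℕ → ℝ) (z : ℕ → E) (y : ℕ → G) (k : ℕ) : G :=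
  c k • (F (z k) - y k)

namespace IsPenaltySeq

variable {f : E → ℝ} {F : E → G} {Γ : Set G} {x d : E} {c : ℕ → ℝ} {z : ℕ → E} {y : ℕ → G}

lemma norm_penaltyMultiplier (h : IsPenaltySeq f F Γ x c z y) (k : ℕ) :
    ‖penaltyMultiplier F c z y k‖ = c k * ‖F (z k) - y k‖ := by
  rw [penaltyMultiplier, norm_smul, Real.norm_of_nonneg (h.nonneg k)]

lemma norm_sub_mul_norm_penaltyMultiplier_le (h : IsPenaltySeq f F Γ x c z y) (k : ℕ) :
    ‖F (z k) - y k‖ * ‖penaltyMultiplier F c z y k‖ ≤ -2 * (f (z k) - f x) := by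
  have hle := h.penaltyFun_le k
  rw [penaltyFun, h.infDist_eq, dist_eq_norm] at hle
  rw [h.norm_penaltyMultiplier]
  linarith [sq_nonneg ‖z k - x‖]

lemma notMem (h : IsPenaltySeq f F Γ x c z y) {k : ℕ} (hk : penaltyMultiplier F c z y k ≠ 0) :
    F (z k) ∉ Γ := fun hmem => by
  have hdist := h.infDist_eq k
  rw [infDist_zero_of_mem hmem] at hdist
  exact right_ne_zero_of_smul hk (sub_eq_zero.2 (dist_eq_zero.1 hdist.symm))

lemma ne (h : IsPenaltySeq f F Γ x c z y) (hx : F x ∈ Γ) {k : ℕ}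
    (hk : penaltyMultiplier F c z y k ≠ 0) : z k ≠ x := fun hzx =>
  h.notMem hk (hzx ▸ hx)

variable [NormedSpace ℝ E]

lemma exists_subseq_direction [ProperSpace E] (h : IsPenaltySeq f F Γ x c z y) (hx : F x ∈ Γ)
    (hinf : Tendsto (fun k => ‖penaltyMultiplier F c z y k‖) atTop atTop) :
    ∃ d, ‖d‖ = 1 ∧ ∃ φ : ℕ → ℕ, StrictMono φ ∧ (∀ k, penaltyMultiplier F c z y (φ k) ≠ 0) ∧
      Tendsto (fun k => ‖z (φ k) - x‖⁻¹ • (z (φ k) - x)) atTop (𝓝 d) := by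
  obtain ⟨N, hN⟩ := eventually_atTop.1 (hinf.eventually_gt_atTop 0)
  have hne (k : ℕ) : penaltyMultiplier F c z y (k + N) ≠ 0 :=
    norm_pos_iff.1 (hN _ (Nat.le_add_left N k))
  obtain ⟨d, hd, φ, hφ, hlim⟩ :=
    exists_subseq_tendsto_inv_norm_smul_sub (z := fun k => z (k + N)) fun k => h.ne hx (hne k)
  exact ⟨d, hd, fun k => φ k + N, hφ.add_const N, fun k => hne (φ k), hlim⟩

lemma exists_norm_sub_mul_norm_penaltyMultiplier_div_le (h : IsPenaltySeq f F Γ x c z y)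
    (hf : DifferentiableAt ℝ f x)
    (hd : Tendsto (fun k => ‖z k - x‖⁻¹ • (z k - x)) atTop (𝓝 d)) :
    ∃ M, ∀ k, ‖F (z k) - y k‖ * ‖penaltyMultiplier F c z y k‖ / ‖z k - x‖ ≤ M := by
  have hquot := tendsto_inv_norm_smul_sub_of_hasFDerivAt hf.hasFDerivAt h.tendsto hd
  obtain ⟨M, hM⟩ := (hquot.const_mul (-2)).bddAbove_range
  refine ⟨M, fun k => le_trans ?_ (hM ⟨k, rfl⟩)⟩
  calc _ ≤ -2 * (f (z k) - f x) / ‖z k - x‖ :=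
        div_le_div_of_nonneg_right (h.norm_sub_mul_norm_penaltyMultiplier_le k) (norm_nonneg _)
    _ = _ := by simp only [smul_eq_mul]; ring

lemma tendsto_inv_norm_smul_sub (h : IsPenaltySeq f F Γ x c z y) (hf : DifferentiableAt ℝ f x)
    (hinf : Tendsto (fun k => ‖penaltyMultiplier F c z y k‖) atTop atTop)
    (hd : Tendsto (fun k => ‖z k - x‖⁻¹ • (z k - x)) atTop (𝓝 d)) :
    Tendsto (fun k => ‖z k - x‖⁻¹ • (F (z k) - y k)) atTop (𝓝 0) := by
  obtain ⟨M, hM⟩ := h.exists_norm_sub_mul_norm_penaltyMultiplier_div_le hf hd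
  refine squeeze_zero_norm' ?_ (tendsto_const_nhds (x := M).div_atTop hinf)
  filter_upwards [hinf.eventually_gt_atTop 0] with k hk
  rw [norm_smul, norm_inv, norm_norm, le_div_iff₀ hk]
  exact (by ring : _ = _).trans_le (hM k)

end IsPenaltySeq

end Multipliers

section Optimality

variable {E : Type*} [NormedAddCommGroup E] {G : Type*} [NormedAddCommGroup G]
  {f : E → ℝ} {F : E → G} {Γ : Set G} {x d : E}
  {c : ℕ → ℝ} {z : ℕ → E} {y : ℕ → G}

lemma IsPenaltySeq.inner_gradient_nonpos [InnerProductSpace ℝ E] [CompleteSpace E]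
    (h : IsPenaltySeq f F Γ x c z y) (hf : DifferentiableAt ℝ f x)
    (hd : Tendsto (fun k => ‖z k - x‖⁻¹ • (z k - x)) atTop (𝓝 d)) : ⟪gradient f x, d⟫ ≤ 0 :=
  le_of_tendsto'
    (tendsto_inv_norm_smul_sub_of_hasFDerivAt hf.hasGradientAt.hasFDerivAt h.tendsto hd) fun k =>
    mul_nonpos_of_nonneg_of_nonpos (by positivity) (sub_nonpos.2 (h.le k))

variable [InnerProductSpace ℝ G]

lemma IsPenaltySeq.penaltyMultiplier_mem_regNormal (h : IsPenaltySeq f F Γ x c z y) (k : ℕ) :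
    penaltyMultiplier F c z y k ∈ regNormal Γ (y k) :=
  smul_mem_regNormal (h.nonneg k) (sub_mem_regNormal_of_infDist_eq_dist (h.mem k) (h.infDist_eq k))

lemma IsPenaltySeq.mem_tanCone [NormedSpace ℝ E] (h : IsPenaltySeq f F Γ x c z y)
    (hf : DifferentiableAt ℝ f x) (hF : LocallyLipschitz F) (hx : F x ∈ Γ)
    (hne : ∀ k, penaltyMultiplier F c z y k ≠ 0)
    (hinf : Tendsto (fun k => ‖penaltyMultiplier F c z y k‖) atTop atTop)
    (hd : Tendsto (fun k => ‖z k - x‖⁻¹ • (z k - x)) atTop (𝓝 d)) {v : G}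
    (hv : Tendsto (fun t : ℝ => t⁻¹ • (F (x + t • d) - F x)) (𝓝[>] 0) (𝓝 v)) :
    v ∈ tanCone Γ (F x) := by
  have hz : Tendsto z atTop (𝓝[≠] x) :=
    tendsto_nhdsWithin_iff.2 ⟨h.tendsto, .of_forall fun k => h.ne hx (hne k)⟩
  refine mem_tanCone_of_tendsto (t := fun k => ‖z k - x‖) hx h.mem
    (fun k => norm_sub_pos_iff.2 (h.ne hx (hne k)))
    (tendsto_iff_norm_sub_tendsto_zero.1 h.tendsto) ?_
  simpa [← smul_sub] using (tendsto_inv_norm_smul_sub_of_locallyLipschitz hF hv hz hd).sub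
    (h.tendsto_inv_norm_smul_sub hf hinf hd)

variable [InnerProductSpace ℝ E] [CompleteSpace E]

lemma isRegSubgradient_of_isLocalMin_penaltyFun {c : ℝ} {z : E} {y : G}
    (hf : DifferentiableAt ℝ f z) (hF : LocallyLipschitz F)
    (h : IsLocalMin (penaltyFun f F {y} x c) z) :
    IsRegSubgradient 0 (fun w => ⟪c • (F z - y), F w⟫) z (x - z - gradient f z) := by
  set ψ : E → ℝ := fun w => f w + c / 2 * ‖F w - F z‖ ^ 2 + 1 / 2 * ‖w - x‖ ^ 2
  have hψ : HasFDerivAt ψ (innerSL ℝ (gradient f z + (z - x))) z := by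
    have hsum := (hf.hasGradientAt.hasFDerivAt.add
      (hasFDerivAt_mul_norm_sub_sq_zero hF (c / 2) z)).add (hasFDerivAt_mul_norm_sub_sq (1 / 2) x z)
    exact hsum.congr_fderiv (by ext v; simp)
  have hsplit : ∀ w, penaltyFun f F {y} x c w
      = ⟪c • (F z - y), F w⟫ + ψ w + (c / 2 * ‖F z - y‖ ^ 2 - ⟪c • (F z - y), F z⟫) := by
    intro w
    have hsq : ‖F w - y‖ ^ 2 = ‖F w - F z‖ ^ 2 + 2 * ⟪F z - y, F w - F z⟫ + ‖F z - y‖ ^ 2 := by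
      rw [← sub_add_sub_cancel (F w) (F z) y, norm_add_sq_real, real_inner_comm]
    simp only [penaltyFun, ψ, infDist_singleton, dist_eq_norm, hsq, inner_sub_right,
      real_inner_smul_left]
    ring
  have hmin : IsLocalMin (fun w => ⟪c • (F z - y), F w⟫ + ψ w) z := by
    filter_upwards [h] with w hw
    simpa only [hsplit, add_le_add_iff_right] using hw
  convert isRegSubgradient_neg_of_isLocalMin_add hmin hψ using 1
  abel

lemma IsPenaltySeq.isRegSubgradient (h : IsPenaltySeq f F Γ x c z y)
    (hf : Differentiable ℝ f) (hF : LocallyLipschitz F) (k : ℕ) :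
    IsRegSubgradient 0 (fun w => ⟪penaltyMultiplier F c z y k, F w⟫) (z k)
      (x - z k - gradient f (z k)) :=
  isRegSubgradient_of_isLocalMin_penaltyFun (hf _) hF
    (isLocalMin_penaltyFun_singleton (h.nonneg k) (h.mem k) (h.infDist_eq k) (h.isLocalMin k))

end Optimality

section Stationarity

variable {n l : ℕ} {f : Eu n → ℝ} {F : Eu n → Eu l} {Γ : Set (Eu l)} {x d : Eu n}
  {c : ℕ → ℝ} {z : ℕ → Eu n} {y : ℕ → Eu l}

lemma IsPenaltySeq.mStat (h : IsPenaltySeq f F Γ x c z y) (hf : Differentiable ℝ f)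
    (hgrad : ContinuousAt (gradient f) x) (hF : LocallyLipschitz F) (hx : F x ∈ Γ) {L : Eu l}
    (hL : Tendsto (penaltyMultiplier F c z y) atTop (𝓝 L)) : MStat f F Γ x := by
  have hslope : Tendsto (fun k => x - z k - gradient f (z k)) atTop (𝓝 (-gradient f x)) := by
    simpa using (h.tendsto.const_sub x).sub (hgrad.tendsto.comp h.tendsto)
  exact ⟨L, mem_limSubdiff_inner_of_tendsto hF h.tendsto hslope hL (h.isRegSubgradient hf hF),
    hx, y, _, h.tendsto_proj hF.continuous hx, hL, h.penaltyMultiplier_mem_regNormal⟩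

lemma IsPenaltySeq.amSeq (h : IsPenaltySeq f F Γ x c z y) (hf : Differentiable ℝ f)
    (hF : LocallyLipschitz F) (hx : F x ∈ Γ) :
    AMSeq f F Γ x z (penaltyMultiplier F c z y) (fun k => F (z k) - y k) (fun k => x - z k) := by
  refine ⟨fun k => (h.isRegSubgradient hf hF k).mem_limSubdiff, fun k => ?_, h.tendsto,
    h.tendsto_sub hF.continuous hx, by simpa using h.tendsto.const_sub x⟩
  rw [sub_sub_cancel]
  exact regNormal_subset_limNormal _ _ (h.penaltyMultiplier_mem_regNormal k)

lemma IsPenaltySeq.amSeqDir (h : IsPenaltySeq f F Γ x c z y) (hf : Differentiable ℝ f)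
    (hF : LocallyLipschitz F) (hx : F x ∈ Γ) (hne : ∀ k, penaltyMultiplier F c z y k ≠ 0)
    (hinf : Tendsto (fun k => ‖penaltyMultiplier F c z y k‖) atTop atTop)
    (hd : Tendsto (fun k => ‖z k - x‖⁻¹ • (z k - x)) atTop (𝓝 d)) :
    AMSeqDir f F Γ x z (penaltyMultiplier F c z y) (fun k => F (z k) - y k) (fun k => x - z k)
      d := by
  refine ⟨h.amSeq hf hF hx, fun k => h.ne hx (hne k), hd,
    h.tendsto_inv_norm_smul_sub (hf x) hinf hd,
    ⟨fun _ => 0, fun _ => le_rfl, tendsto_const_nhds, fun k => ?_⟩,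
    h.exists_norm_sub_mul_norm_penaltyMultiplier_div_le (hf x) hd⟩
  rw [h.norm_penaltyMultiplier, penaltyMultiplier, smul_smul, mul_comm (c k), sub_self, norm_zero,
    mul_zero]

end Stationarity

lemma continuous_gradient {E : Type*} [NormedAddCommGroup E] [InnerProductSpace ℝ E]
    [CompleteSpace E] {f : E → ℝ} (hf : ContDiff ℝ 1 f) : Continuous (gradient f) :=
  (LinearIsometryEquiv.continuous _).comp (hf.continuous_fderiv one_ne_zero)

theorem stmt15_general {n l : ℕ}
    (f : Eu n → ℝ) (hf : Differentiable ℝ f)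
    (F : Eu n → Eu l) (F' : Eu n → Eu n → Eu l) (hLip : LocallyLipschitz F)
    (Γ : Set (Eu l)) (hΓcl : IsClosed Γ)
    (x : Eu n) (hgrad : ContinuousAt (gradient f) x)
    (hF' : ∀ d, Tendsto (fun t : ℝ => t⁻¹ • (F (x + t • d) - F x)) (𝓝[>] 0) (𝓝 (F' x d)))
    (hfeas : F x ∈ Γ) (hmin : IsLocalMinOn f (F ⁻¹' Γ) x) :
    MStat f F Γ x ∨
    ∃ d ∈ critCone f F F' Γ x, ‖d‖ = 1 ∧
      ∃ (xk : ℕ → Eu n) (lamk δk : ℕ → Eu l) (εk : ℕ → Eu n),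
        AMSeqDir f F Γ x xk lamk δk εk d ∧
        Tendsto (fun k => ‖lamk k‖) atTop atTop ∧
        (∀ k, xk k ∉ F ⁻¹' Γ) ∧ (∀ k, δk k ≠ 0) := by
  obtain ⟨c, z, y, hs⟩ := exists_isPenaltySeq hf.continuous hLip.continuous hΓcl hfeas hmin
  by_cases hinf : Tendsto (fun k => ‖penaltyMultiplier F c z y k‖) atTop atTop
  · obtain ⟨d, hd1, φ, hφ, hne, hd⟩ := hs.exists_subseq_direction hfeas hinf
    have hsφ := hs.comp hφ.tendsto_atTop
    have hinfφ := hinf.comp hφ.tendsto_atTop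
    exact .inr ⟨d, ⟨hsφ.inner_gradient_nonpos (hf x) hd,
      hsφ.mem_tanCone (hf x) hLip hfeas hne hinfφ hd (hF' d)⟩, hd1, _, _, _, _,
      hsφ.amSeqDir hf hLip hfeas hne hinfφ hd, hinfφ, fun k => hsφ.notMem (hne k),
      fun k => right_ne_zero_of_smul (hne k)⟩
  · obtain ⟨L, φ, hφ, hL⟩ := exists_subseq_tendsto_of_not_tendsto_norm_atTop hinf
    exact .inl ((hs.comp hφ.tendsto_atTop).mStat hf hgrad hLip hfeas hL)

/-- A local minimizer of (P) is either M-stationary or AM-stationary in some explicit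
critical unit direction along a sequence with diverging multipliers, infeasible iterates
and nonvanishing perturbations. -/
theorem stmt15 {n l : ℕ}
    (f : Eu n → ℝ) (hf : ContDiff ℝ 1 f)
    (F : Eu n → Eu l) (F' : Eu n → Eu n → Eu l)
    (hLip : LocallyLipschitz F) (hF' : IsDirDeriv F F')
    (Γ : Set (Eu l)) (hΓne : Γ.Nonempty) (hΓcl : IsClosed Γ)
    (x : Eu n) (hfeas : F x ∈ Γ) (hmin : IsLocalMinOn f (F ⁻¹' Γ) x) :
    MStat f F Γ x ∨
    ∃ d ∈ critCone f F F' Γ x, ‖d‖ = 1 ∧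
      ∃ (xk : ℕ → Eu n) (lamk δk : ℕ → Eu l) (εk : ℕ → Eu n),
        AMSeqDir f F Γ x xk lamk δk εk d ∧
        Tendsto (fun k => ‖lamk k‖) atTop atTop ∧
        (∀ k, xk k ∉ F ⁻¹' Γ) ∧ (∀ k, δk k ≠ 0) := by
  exact stmt15_general f (hf.differentiable one_ne_zero) F F' hLip Γ hΓcl x
    (continuous_gradient hf).continuousAt (hF' x) hfeas hmin

end
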